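/- arXiv:2309.16605 — 3 statements merged into one kernel-verified Lean document; each statement's English description precedes it below -/
import Mathlib

section
/- Let X and U be Hausdorff topological spaces, V a topological space, and let f : U → X and g : V → U be continuous open embeddings. Then the Pontryagin–Thom collapse maps compose contravariantly: the collapse map OnePoint X → OnePoint V associated to the open embedding f ∘ g : V → X equals the composite of the collapse map OnePoint X → OnePoint U associated to f followed by the collapse map OnePoint U → OnePoint V associated to g. -/
/-- `c` is the Pontryagin–Thom collapse map of `f`: it inverts `f` on its range and sends every
other point to `∞`. This is a predicate on `c` rather than a construction from `f`, so that `c` is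
not given a junk value for non-injective `f`, where no such map exists. -/
structure IsCollapse {X U : Type*} (f : U → X) (c : OnePoint X → OnePoint U) : Prop where
  apply_coe : ∀ u, c (f u) = u
  apply_of_forall_ne : ∀ x : X, (∀ u, x ≠ f u) → c x = OnePoint.infty
  apply_infty : c OnePoint.infty = OnePoint.infty

section IsCollapse

variable {X U V : Type*} {f : U → X} {g : V → U} {c c' : OnePoint X → OnePoint U}
  {d : OnePoint U → OnePoint V}

theorem IsCollapse.apply_eq_coe_iff (hc : IsCollapse f c) {z : OnePoint X} {u : U} :
    c z = u ↔ z = f u := by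
  refine ⟨fun hz => ?_, fun hz => hz ▸ hc.apply_coe u⟩
  induction z using OnePoint.rec with
  | infty => exact absurd (hc.apply_infty.symm.trans hz) (OnePoint.infty_ne_coe u)
  | coe x =>
    by_cases hx : ∀ u', x ≠ f u'
    · exact absurd ((hc.apply_of_forall_ne x hx).symm.trans hz) (OnePoint.infty_ne_coe u)
    · push Not at hx
      obtain ⟨u', rfl⟩ := hx
      rw [OnePoint.coe_injective ((hc.apply_coe u').symm.trans hz)]

theorem isCollapse_iff : IsCollapse f c ↔ ∀ (z : OnePoint X) (u : U), c z = u ↔ z = f u where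
  mp hc _ _ := hc.apply_eq_coe_iff
  mpr h :=
    { apply_coe u := (h (f u) u).2 rfl
      apply_of_forall_ne x hx := OnePoint.notMem_range_coe_iff.1 fun ⟨u, hu⟩ =>
        hx u (OnePoint.coe_injective ((h x u).1 hu.symm))
      apply_infty := OnePoint.notMem_range_coe_iff.1 fun ⟨u, hu⟩ =>
        OnePoint.infty_ne_coe (f u) ((h OnePoint.infty u).1 hu.symm) }

theorem IsCollapse.unique (hc : IsCollapse f c) (hc' : IsCollapse f c') : c = c' :=
  funext fun _ => Option.ext fun _ => hc.apply_eq_coe_iff.trans hc'.apply_eq_coe_iff.symm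

theorem IsCollapse.comp (hd : IsCollapse g d) (hc : IsCollapse f c) :
    IsCollapse (f ∘ g) (d ∘ c) :=
  isCollapse_iff.2 fun _ _ => hd.apply_eq_coe_iff.trans hc.apply_eq_coe_iff

theorem collapse_comp_general {e : OnePoint X → OnePoint V} (hc : IsCollapse f c)
    (hd : IsCollapse g d) (he : IsCollapse (f ∘ g) e) : e = d ∘ c :=
  he.unique (hd.comp hc)

end IsCollapse

/-- Pontryagin–Thom collapse maps of one-point compactifications compose
contravariantly: the collapse map of `f ∘ g` is the collapse map of `g`
composed with the collapse map of `f`. Each collapse map is characterized by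
sending points in the image of the embedding back to their (unique) preimage
and all other points (including `∞`) to `∞`. -/
theorem collapse_comp {X U V : Type*} [TopologicalSpace X] [TopologicalSpace U]
    [TopologicalSpace V] [T2Space X] [T2Space U]
    (f : U → X) (hf : Topology.IsOpenEmbedding f)
    (g : V → U) (hg : Topology.IsOpenEmbedding g)
    (cf : OnePoint X → OnePoint U)
    (hcf_mem : ∀ u : U, cf ((f u : X) : OnePoint X) = (u : OnePoint U))
    (hcf_not : ∀ x : X, (∀ u : U, x ≠ f u) → cf (x : OnePoint X) = OnePoint.infty)
    (hcf_infty : cf OnePoint.infty = OnePoint.infty)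
    (cg : OnePoint U → OnePoint V)
    (hcg_mem : ∀ v : V, cg ((g v : U) : OnePoint U) = (v : OnePoint V))
    (hcg_not : ∀ u : U, (∀ v : V, u ≠ g v) → cg (u : OnePoint U) = OnePoint.infty)
    (hcg_infty : cg OnePoint.infty = OnePoint.infty)
    (cfg : OnePoint X → OnePoint V)
    (hcfg_mem : ∀ v : V, cfg ((f (g v) : X) : OnePoint X) = (v : OnePoint V))
    (hcfg_not : ∀ x : X, (∀ v : V, x ≠ f (g v)) → cfg (x : OnePoint X) = OnePoint.infty)
    (hcfg_infty : cfg OnePoint.infty = OnePoint.infty) :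
    cfg = cg ∘ cf :=
  collapse_comp_general ⟨hcf_mem, hcf_not, hcf_infty⟩ ⟨hcg_mem, hcg_not, hcg_infty⟩
    ⟨hcfg_mem, hcfg_not, hcfg_infty⟩
end

section
/- Let M and N be topological spaces and k a natural number. There is a homeomorphism between the ordered configuration space Conf(M ⊕ N, k) of k labeled points in the disjoint union (sum) of M and N, and the disjoint sum, indexed over all subsets S ⊆ Fin k (S : Finset (Fin k)), of the product spaces Conf_S(M) × Conf_{Sᶜ}(N), where Conf_S(M) denotes the subspace of S → M (product topology, S viewed as a subtype) consisting of injective functions; the homeomorphism sends a configuration f : Fin k → M ⊕ N to the pair of its restrictions to the set S of labels landing in M and its complement Sᶜ of labels landing in N. -/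
/-!
The set of labels landing in `M` is a locally constant function of the configuration, because a
label cannot jump between the two open summands and there are finitely many labels. Hence
`Conf(M ⊕ N)` is the disjoint sum of the fibres of this function, and over `S` a configuration is
the same thing as its restrictions to `S` and `Sᶜ`: injectivity imposes no condition relating the
two, since points of `M` and points of `N` are always distinct.
-/

open Function

section LocallyConstant

variable {X I : Type*} [TopologicalSpace X] {c : X → I}

/-- The decomposition of a space as the disjoint sum of the fibres of a locally constant map. -/
def sigmaFiberHomeomorph (hc : IsLocallyConstant c) : (Σ i, {x // c x = i}) ≃ₜ X :=
  (Equiv.sigmaFiberEquiv c).toHomeomorphOfContinuousOpen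
    (continuous_sigma fun _ => continuous_subtype_val)
    (isOpenMap_sigma.2 fun i => (hc.isOpen_fiber i).isOpenMap_subtype_val)

end LocallyConstant

section ContinuousProjections

variable {X M N : Type*} [TopologicalSpace X] [TopologicalSpace M] [TopologicalSpace N]
  {f : X → M ⊕ N}

theorem continuous_getLeft (hf : Continuous f) (h : ∀ x, (f x).isLeft) :
    Continuous fun x => (f x).getLeft (h x) :=
  Topology.IsEmbedding.inl.continuous_iff.2 (hf.congr fun x => (Sum.inl_getLeft (f x) (h x)).symm)

theorem continuous_getRight (hf : Continuous f) (h : ∀ x, (f x).isRight) :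
    Continuous fun x => (f x).getRight (h x) :=
  Topology.IsEmbedding.inr.continuous_iff.2 (hf.congr fun x => (Sum.inr_getRight (f x) (h x)).symm)

end ContinuousProjections

section Labels

variable {ι M N : Type*} [Fintype ι]

/-- The set of labels that a family of points of `M ⊕ N` sends to `M`. -/
def leftLabels (f : ι → M ⊕ N) : Finset ι :=
  Finset.univ.filter fun i => (f i).isLeft

theorem mem_leftLabels {f : ι → M ⊕ N} {i : ι} : i ∈ leftLabels f ↔ (f i).isLeft := by
  simp [leftLabels]

theorem mem_compl_leftLabels [DecidableEq ι] {f : ι → M ⊕ N} {i : ι} :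
    i ∈ (leftLabels f)ᶜ ↔ (f i).isRight := by
  rw [Finset.mem_compl, mem_leftLabels, Sum.not_isLeft]

theorem isLocallyConstant_leftLabels [TopologicalSpace M] [TopologicalSpace N] :
    IsLocallyConstant (leftLabels : (ι → M ⊕ N) → Finset ι) := by
  have sides : IsLocallyConstant fun (f : ι → M ⊕ N) i => (f i).isLeft :=
    (IsLocallyConstant.iff_continuous _).2
      (continuous_pi fun i => continuous_isLeft.comp (continuous_apply i))
  exact sides.comp fun b => Finset.univ.filter fun i => b i

end Labels

section Glue

variable {ι M N : Type*} [Fintype ι] [DecidableEq ι] {S : Finset ι}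

/-- The family of points of `M ⊕ N` given by `g` on the labels in `S` and by `h` on the others. -/
def glue (g : S → M) (h : (Sᶜ : Finset ι) → N) (i : ι) : M ⊕ N :=
  if hi : i ∈ S then Sum.inl (g ⟨i, hi⟩) else Sum.inr (h ⟨i, Finset.mem_compl.2 hi⟩)

variable {g : S → M} {h : (Sᶜ : Finset ι) → N}

theorem glue_apply_mem (i : S) : glue g h i = Sum.inl (g i) :=
  dif_pos i.2

theorem glue_apply_compl (i : (Sᶜ : Finset ι)) : glue g h i = Sum.inr (h i) :=
  dif_neg (Finset.mem_compl.1 i.2)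

theorem glue_injective (hg : Injective g) (hh : Injective h) : Injective (glue g h) := by
  intro i j hij
  unfold glue at hij
  split_ifs at hij
  · exact congrArg Subtype.val (hg (Sum.inl.inj hij))
  · exact congrArg Subtype.val (hh (Sum.inr.inj hij))

theorem leftLabels_glue : leftLabels (glue g h) = S := by
  ext i
  by_cases hi : i ∈ S <;> simp [mem_leftLabels, glue, hi]

theorem glue_eq {f : ι → M ⊕ N} (hg : ∀ i : S, Sum.inl (g i) = f i)
    (hh : ∀ i : (Sᶜ : Finset ι), Sum.inr (h i) = f i) : glue g h = f := by
  funext i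
  by_cases hi : i ∈ S
  · exact (glue_apply_mem ⟨i, hi⟩).trans (hg ⟨i, hi⟩)
  · exact (glue_apply_compl ⟨i, Finset.mem_compl.2 hi⟩).trans (hh ⟨i, Finset.mem_compl.2 hi⟩)

theorem continuous_glue [TopologicalSpace M] [TopologicalSpace N] :
    Continuous fun p : (S → M) × ((Sᶜ : Finset ι) → N) => glue p.1 p.2 := by
  refine continuous_pi fun i => ?_
  by_cases hi : i ∈ S
  · simp only [glue, dif_pos hi]
    fun_prop
  · simp only [glue, dif_neg hi]
    fun_prop

end Glue

/-- The ordered configuration space of points of `X` labeled by `ι`, with the subspace topology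
of the product `ι → X`. -/
abbrev Conf (ι X : Type*) : Type _ :=
  {f : ι → X // Injective f}

namespace Conf

variable {ι M N : Type*} [Fintype ι] {S : Finset ι}

/-- The points in `M` of a configuration whose set of labels landing in `M` is `S`. -/
def leftPart (f : {f : Conf ι (M ⊕ N) // leftLabels f.1 = S}) : Conf S M :=
  ⟨fun i => (f.1.1 i).getLeft (mem_leftLabels.1 (f.2.symm ▸ i.2)), fun i j hij =>
    Subtype.ext (f.1.2 (by simpa using congrArg (Sum.inl (β := N)) hij))⟩

theorem inl_leftPart (f : {f : Conf ι (M ⊕ N) // leftLabels f.1 = S}) (i : S) :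
    Sum.inl ((leftPart f).1 i) = f.1.1 i :=
  Sum.inl_getLeft _ _

theorem continuous_leftPart [TopologicalSpace M] [TopologicalSpace N] :
    Continuous (leftPart : {f : Conf ι (M ⊕ N) // leftLabels f.1 = S} → Conf S M) :=
  (continuous_pi fun i => continuous_getLeft ((continuous_apply i.1).comp
    (continuous_subtype_val.comp continuous_subtype_val)) _).subtype_mk _

variable [DecidableEq ι]

/-- The points in `N` of a configuration whose set of labels landing in `M` is `S`. -/
def rightPart (f : {f : Conf ι (M ⊕ N) // leftLabels f.1 = S}) : Conf (Sᶜ : Finset ι) N :=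
  ⟨fun i => (f.1.1 i).getRight (mem_compl_leftLabels.1 (f.2.symm ▸ i.2)), fun i j hij =>
    Subtype.ext (f.1.2 (by simpa using congrArg (Sum.inr (α := M)) hij))⟩

theorem inr_rightPart (f : {f : Conf ι (M ⊕ N) // leftLabels f.1 = S}) (i : (Sᶜ : Finset ι)) :
    Sum.inr ((rightPart f).1 i) = f.1.1 i :=
  Sum.inr_getRight _ _

theorem continuous_rightPart [TopologicalSpace M] [TopologicalSpace N] :
    Continuous (rightPart : {f : Conf ι (M ⊕ N) // leftLabels f.1 = S} → Conf (Sᶜ : Finset ι) N) :=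
  (continuous_pi fun i => continuous_getRight ((continuous_apply i.1).comp
    (continuous_subtype_val.comp continuous_subtype_val)) _).subtype_mk _

variable [TopologicalSpace M] [TopologicalSpace N]

/-- The configurations whose labels landing in `M` are those in `S` are the pairs of an
`S`-labeled configuration in `M` and an `Sᶜ`-labeled configuration in `N`. -/
def fiberHomeomorph (S : Finset ι) :
    {f : Conf ι (M ⊕ N) // leftLabels f.1 = S} ≃ₜ Conf S M × Conf (Sᶜ : Finset ι) N where
  toFun f := (leftPart f, rightPart f)
  invFun p := ⟨⟨glue p.1.1 p.2.1, glue_injective p.1.2 p.2.2⟩, leftLabels_glue⟩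
  left_inv f := Subtype.ext (Subtype.ext (glue_eq (inl_leftPart f) (inr_rightPart f)))
  right_inv p := by
    refine Prod.ext (Subtype.ext (funext fun i => ?_)) (Subtype.ext (funext fun i => ?_))
    · exact Sum.inl_injective ((inl_leftPart _ i).trans (glue_apply_mem i))
    · exact Sum.inr_injective ((inr_rightPart _ i).trans (glue_apply_compl i))
  continuous_toFun := continuous_leftPart.prodMk continuous_rightPart
  continuous_invFun :=
    ((continuous_glue.comp
      (continuous_subtype_val.prodMap continuous_subtype_val)).subtype_mk _).subtype_mk _

/-- The decomposition of the configuration space of `M ⊕ N` according to the set of labels landing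
in `M`. -/
noncomputable def sumHomeomorph :
    Conf ι (M ⊕ N) ≃ₜ (S : Finset ι) × (Conf S M × Conf (Sᶜ : Finset ι) N) :=
  (sigmaFiberHomeomorph (isLocallyConstant_leftLabels.comp_continuous
    continuous_subtype_val)).symm.trans
    (IsHomeomorph.sigmaMap bijective_id fun S => (fiberHomeomorph S).isHomeomorph).homeomorph

end Conf

theorem conf_sum_homeomorph_general (ι M N : Type*) [Fintype ι] [DecidableEq ι]
    [TopologicalSpace M] [TopologicalSpace N] :
    ∃ h : Conf ι (M ⊕ N) ≃ₜ (S : Finset ι) × (Conf S M × Conf (Sᶜ : Finset ι) N),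
      ∀ f : Conf ι (M ⊕ N),
        (h f).1 = Finset.univ.filter (fun i => (f.1 i).isLeft) ∧
        (∀ i : ((h f).1 : Finset ι), Sum.inl ((h f).2.1.1 i) = f.1 i) ∧
        (∀ i : (((h f).1)ᶜ : Finset ι), Sum.inr ((h f).2.2.1 i) = f.1 i) :=
  ⟨Conf.sumHomeomorph, fun f =>
    ⟨rfl, Conf.inl_leftPart ⟨f, rfl⟩, Conf.inr_rightPart ⟨f, rfl⟩⟩⟩

/-- The ordered configuration space of `k` labeled points in a disjoint union
`M ⊕ N` is homeomorphic to the disjoint sum, over all subsets `S` of the labels,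
of the products of the `S`-labeled configuration space of `M` with the
`Sᶜ`-labeled configuration space of `N`; the homeomorphism restricts a
configuration to the labels landing in `M` and those landing in `N`. -/
theorem conf_sum_homeomorph (M N : Type*) [TopologicalSpace M] [TopologicalSpace N]
    (k : ℕ) :
    ∃ h : {f : Fin k → M ⊕ N // Function.Injective f} ≃ₜ
        (S : Finset (Fin k)) ×
          ({g : S → M // Function.Injective g} ×
            {g : (Sᶜ : Finset (Fin k)) → N // Function.Injective g}),
      ∀ f : {f : Fin k → M ⊕ N // Function.Injective f},
        (h f).1 = Finset.univ.filter (fun i => (f.1 i).isLeft) ∧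
        (∀ i : ((h f).1 : Finset (Fin k)), Sum.inl ((h f).2.1.1 i) = f.1 i) ∧
        (∀ i : (((h f).1)ᶜ : Finset (Fin k)), Sum.inr ((h f).2.2.1 i) = f.1 i) :=
  conf_sum_homeomorph_general (Fin k) M N
end

section
/- Fix natural numbers n and k. Let D(n, k) be the space of configurations of k labeled disjoint open round disks in the open unit disk: the subspace of Fin k → (EuclideanSpace ℝ (Fin n)) × ℝ consisting of those (c, r) such that for every i, 0 < r i and Metric.ball (c i) (r i) ⊆ Metric.ball 0 1, and for all i ≠ j the balls Metric.ball (c i) (r i) and Metric.ball (c j) (r j) are disjoint. Then the 'centers' map D(n, k) → Conf(Metric.ball (0 : EuclideanSpace ℝ (Fin n)) 1, k), sending (c, r) to the injective function i ↦ c i, is a homotopy equivalence: there exists a continuous map in the other direction such that both composites are homotopic to the respective identity maps. -/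
/-!
A configuration of balls lying over given centers may be shrunk freely as long as the radii stay
positive. Hence any two continuous families of ball configurations with the same centers are
homotopic: both shrink linearly to the family whose radii are the pointwise minima. Consequently
every continuous section of the centers map is a homotopy inverse to it, and a section is obtained
by taking as `i`-th radius the minimum of the half-distances to the other points and of a
continuous function bounded by the distance to the complement of the ambient open set.
-/

open Metric Set

/-- The ordered configuration space of points of `M` labeled by `ι`, topologized as a subspace of
the product `ι → M`. -/
abbrev Config (ι M : Type*) : Type _ :=
  {g : ι → M // Function.Injective g}

/-- The space of configurations of pairwise disjoint open balls contained in `U` and labeled by `ι`,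
each ball being recorded as the pair of its center and its radius. For `U` the open unit ball of
`ℝⁿ` and `ι = Fin k` this is the `k`-th space of the little `n`-disks operad. -/
abbrev BallConfig (ι : Type*) {X : Type*} [PseudoMetricSpace X] (U : Set X) : Type _ :=
  {p : ι → X × ℝ // (∀ i, 0 < (p i).2 ∧ ball (p i).1 (p i).2 ⊆ U) ∧
    ∀ i j, i ≠ j → Disjoint (ball (p i).1 (p i).2) (ball (p j).1 (p j).2)}

namespace BallConfig

section PseudoMetricSpace

variable {ι X Y : Type*} [PseudoMetricSpace X] [TopologicalSpace Y] {U : Set X}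

/-- The center of the `i`-th ball. -/
def center (p : BallConfig ι U) (i : ι) : X :=
  (p.1 i).1

/-- The radius of the `i`-th ball. -/
def radius (p : BallConfig ι U) (i : ι) : ℝ :=
  (p.1 i).2

lemma radius_pos (p : BallConfig ι U) (i : ι) : 0 < p.radius i :=
  (p.2.1 i).1

lemma ball_subset (p : BallConfig ι U) (i : ι) : ball (p.center i) (p.radius i) ⊆ U :=
  (p.2.1 i).2

lemma disjoint_ball (p : BallConfig ι U) {i j : ι} (hij : i ≠ j) :
    Disjoint (ball (p.center i) (p.radius i)) (ball (p.center j) (p.radius j)) :=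
  p.2.2 i j hij

lemma ext_center_radius {p q : BallConfig ι U} (hc : ∀ i, p.center i = q.center i)
    (hr : ∀ i, p.radius i = q.radius i) : p = q :=
  Subtype.ext (funext fun i => Prod.ext (hc i) (hr i))

lemma continuous_iff {f : Y → BallConfig ι U} :
    Continuous f ↔
      (∀ i, Continuous fun y => (f y).center i) ∧ ∀ i, Continuous fun y => (f y).radius i := by
  rw [continuous_induced_rng, continuous_pi_iff, ← forall_and]
  exact forall_congr' fun _ => continuous_prodMk

lemma continuous_center (f : C(Y, BallConfig ι U)) (i : ι) :
    Continuous fun y => (f y).center i :=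
  (continuous_iff.1 f.continuous).1 i

lemma continuous_radius (f : C(Y, BallConfig ι U)) (i : ι) :
    Continuous fun y => (f y).radius i :=
  (continuous_iff.1 f.continuous).2 i

lemma center_mem (p : BallConfig ι U) (i : ι) : p.center i ∈ U :=
  p.ball_subset i (mem_ball_self (p.radius_pos i))

lemma center_injective (p : BallConfig ι U) : Function.Injective p.center := by
  intro i j hij
  by_contra hne
  exact disjoint_left.1 (p.disjoint_ball hne) (mem_ball_self (p.radius_pos i))
    (hij ▸ mem_ball_self (p.radius_pos j))

/-- The map sending a configuration of balls to the configuration of their centers. -/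
def centers : C(BallConfig ι U, Config ι U) where
  toFun p := ⟨fun i => ⟨p.center i, p.center_mem i⟩,
    fun _ _ h => p.center_injective (congrArg Subtype.val h)⟩
  continuous_toFun := Continuous.subtype_mk
    (continuous_pi fun i => (continuous_center (.id _) i).subtype_mk _) _

/-- The configuration with the same centers as `p` and the smaller radii `r`. -/
def shrink (p : BallConfig ι U) (r : ι → ℝ) (hr : ∀ i, 0 < r i) (hrp : ∀ i, r i ≤ p.radius i) :
    BallConfig ι U :=
  ⟨fun i => (p.center i, r i),
    fun i => ⟨hr i, (ball_subset_ball (hrp i)).trans (p.ball_subset i)⟩,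
    fun i j hij => (p.disjoint_ball hij).mono (ball_subset_ball (hrp i)) (ball_subset_ball (hrp j))⟩

lemma center_eq_of_centers_comp_eq {f g : C(Y, BallConfig ι U)}
    (h : centers.comp f = centers.comp g) (y : Y) (i : ι) : (f y).center i = (g y).center i :=
  congrArg (fun c : Config ι U => (c.1 i : X)) (DFunLike.congr_fun h y)

lemma homotopic_of_radius_le {f g : C(Y, BallConfig ι U)} (hc : centers.comp f = centers.comp g)
    (hr : ∀ y i, (g y).radius i ≤ (f y).radius i) : f.Homotopic g := by
  let r (t : unitInterval) (y : Y) (i : ι) : ℝ :=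
    AffineMap.lineMap ((f y).radius i) ((g y).radius i) (t : ℝ)
  have r_mem (t : unitInterval) (y : Y) (i : ι) :
      r t y i ∈ Icc ((g y).radius i) ((f y).radius i) :=
    (convex_Icc _ _).lineMap_mem (right_mem_Icc.2 (hr y i)) (left_mem_Icc.2 (hr y i)) t.2
  have continuous_r (i : ι) : Continuous fun q : unitInterval × Y => r q.1 q.2 i := by
    have hf : Continuous fun q : unitInterval × Y => (f q.2).radius i :=
      (continuous_radius f i).comp continuous_snd
    have hg : Continuous fun q : unitInterval × Y => (g q.2).radius i :=
      (continuous_radius g i).comp continuous_snd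
    exact hf.lineMap hg (continuous_subtype_val.comp continuous_fst)
  exact ⟨{
    toFun q := (f q.2).shrink (r q.1 q.2)
      (fun i => ((g q.2).radius_pos i).trans_le (r_mem q.1 q.2 i).1) fun i => (r_mem q.1 q.2 i).2
    continuous_toFun :=
      continuous_iff.2 ⟨fun i => (continuous_center f i).comp continuous_snd, continuous_r⟩
    map_zero_left y := ext_center_radius (fun _ => rfl) fun _ => AffineMap.lineMap_apply_zero _ _
    map_one_left y := ext_center_radius (center_eq_of_centers_comp_eq hc y)
      fun _ => AffineMap.lineMap_apply_one _ _ }⟩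

lemma homotopic_of_centers_comp_eq {f g : C(Y, BallConfig ι U)}
    (h : centers.comp f = centers.comp g) : f.Homotopic g := by
  let m : C(Y, BallConfig ι U) :=
    { toFun y := (f y).shrink (fun i => min ((f y).radius i) ((g y).radius i))
        (fun i => lt_min ((f y).radius_pos i) ((g y).radius_pos i)) fun i => min_le_left _ _
      continuous_toFun := continuous_iff.2
        ⟨continuous_center f, fun i => (continuous_radius f i).min (continuous_radius g i)⟩ }
  have hm : centers.comp f = centers.comp m := rfl
  exact (homotopic_of_radius_le hm fun _ _ => min_le_left _ _).trans
    (homotopic_of_radius_le (h.symm.trans hm) fun _ _ => min_le_right _ _).symm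

end PseudoMetricSpace

end BallConfig

lemma exists_continuousMap_ball_subset_of_isOpen {X : Type*} [PseudoMetricSpace X] {U : Set X}
    (hU : IsOpen U) : ∃ ρ : C(X, ℝ), ∀ x ∈ U, 0 < ρ x ∧ ball x (ρ x) ⊆ U := by
  -- `infDist x ∅ = 0`, so an empty complement has to be treated separately.
  obtain hempty | hne := (Uᶜ).eq_empty_or_nonempty
  · exact ⟨.const X 1, fun x _ => ⟨one_pos, by simp [compl_empty_iff.1 hempty]⟩⟩
  · refine ⟨⟨fun x => infDist x Uᶜ, continuous_infDist_pt _⟩, fun x hx => ⟨?_, ?_⟩⟩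
    · exact (hU.isClosed_compl.notMem_iff_infDist_pos hne).1 (not_not.2 hx)
    · exact ball_infDist_compl_subset

section SeparatingRadius

variable {ι X : Type*} [Fintype ι] [DecidableEq ι]

/-- The radius of the `i`-th ball in a family of pairwise disjoint balls centered at the points
`c`: the minimum of the half-distances from `c i` to the other points and of a bound `ρ (c i)`,
which is the entry at `j = i`. -/
noncomputable def separatingRadius [PseudoMetricSpace X] (ρ : X → ℝ) (c : ι → X) (i : ι) : ℝ :=
  Finset.univ.inf' ⟨i, Finset.mem_univ i⟩ fun j => if j = i then ρ (c i) else dist (c i) (c j) / 2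

lemma separatingRadius_le [PseudoMetricSpace X] (ρ : X → ℝ) (c : ι → X) (i : ι) :
    separatingRadius ρ c i ≤ ρ (c i) :=
  (Finset.inf'_le _ (Finset.mem_univ i)).trans_eq (if_pos rfl)

lemma separatingRadius_le_dist_div_two [PseudoMetricSpace X] (ρ : X → ℝ) (c : ι → X) {i j : ι}
    (hij : i ≠ j) : separatingRadius ρ c i ≤ dist (c i) (c j) / 2 :=
  (Finset.inf'_le _ (Finset.mem_univ j)).trans_eq (if_neg hij.symm)

lemma separatingRadius_pos [MetricSpace X] {ρ : X → ℝ} {c : ι → X} (hc : Function.Injective c)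
    {i : ι} (hρ : 0 < ρ (c i)) : 0 < separatingRadius ρ c i := by
  refine (Finset.lt_inf'_iff _).2 fun j _ => ?_
  split_ifs with hji
  · exact hρ
  · exact half_pos (dist_pos.2 (hc.ne (Ne.symm hji)))

lemma disjoint_ball_separatingRadius [PseudoMetricSpace X] (ρ : X → ℝ) (c : ι → X) {i j : ι}
    (hij : i ≠ j) :
    Disjoint (ball (c i) (separatingRadius ρ c i)) (ball (c j) (separatingRadius ρ c j)) := by
  apply ball_disjoint_ball
  calc separatingRadius ρ c i + separatingRadius ρ c j
      ≤ dist (c i) (c j) / 2 + dist (c j) (c i) / 2 :=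
        add_le_add (separatingRadius_le_dist_div_two ρ c hij)
          (separatingRadius_le_dist_div_two ρ c hij.symm)
    _ = dist (c i) (c j) := by rw [dist_comm (c j), add_halves]

lemma continuous_separatingRadius [PseudoMetricSpace X] {ρ : X → ℝ} (hρ : Continuous ρ) (i : ι) :
    Continuous fun c : ι → X => separatingRadius ρ c i := by
  refine Continuous.finset_inf'_apply _ fun j _ => ?_
  split_ifs <;> fun_prop

end SeparatingRadius

lemma BallConfig.exists_centers_comp_eq_id {ι X : Type*} [Finite ι] [MetricSpace X] {U : Set X}
    (hU : IsOpen U) : ∃ G : C(Config ι U, BallConfig ι U), centers.comp G = .id _ := by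
  classical
  have := Fintype.ofFinite ι
  obtain ⟨ρ, hρ⟩ := exists_continuousMap_ball_subset_of_isOpen hU
  let c (g : Config ι U) (i : ι) : X := g.1 i
  have c_injective (g : Config ι U) : Function.Injective (c g) := Subtype.val_injective.comp g.2
  have continuous_c : Continuous c := continuous_pi fun i =>
    continuous_subtype_val.comp ((continuous_apply i).comp continuous_subtype_val)
  let G (g : Config ι U) : BallConfig ι U :=
    ⟨fun i => (c g i, separatingRadius ρ (c g) i),
      fun i => ⟨separatingRadius_pos (c_injective g) (hρ _ (g.1 i).2).1,
        (ball_subset_ball (separatingRadius_le ρ (c g) i)).trans (hρ _ (g.1 i).2).2⟩,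
      fun _ _ hij => disjoint_ball_separatingRadius ρ (c g) hij⟩
  have continuous_G : Continuous G := continuous_iff.2
    ⟨continuous_pi_iff.1 continuous_c,
      fun i => (continuous_separatingRadius ρ.continuous i).comp continuous_c⟩
  exact ⟨⟨G, continuous_G⟩, rfl⟩

theorem centers_map_homotopyEquiv_general {ι X : Type*} [Finite ι] [MetricSpace X] {U : Set X}
    (hU : IsOpen U) :
    ∃ F : C(BallConfig ι U, Config ι U), (∀ p i, ((F p).1 i : X) = p.center i) ∧
      ∃ G, (F.comp G).Homotopic (ContinuousMap.id _) ∧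
        (G.comp F).Homotopic (ContinuousMap.id _) := by
  obtain ⟨G, hG⟩ := BallConfig.exists_centers_comp_eq_id (ι := ι) hU
  refine ⟨BallConfig.centers, fun _ _ => rfl, G, hG ▸ .refl _, ?_⟩
  apply BallConfig.homotopic_of_centers_comp_eq
  rw [← ContinuousMap.comp_assoc, hG, ContinuousMap.id_comp, ContinuousMap.comp_id]

/-- The "centers" map, from the space `D(n,k)` of configurations of `k` labeled
disjoint open round disks in the open unit disk of `ℝⁿ` to the ordered
configuration space of `k` points in the open unit ball, is a homotopy
equivalence: it is continuous, and there is a continuous map in the other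
direction such that both composites are homotopic to the identity. -/
theorem centers_map_homotopyEquiv (n k : ℕ) :
    ∃ F : C({p : Fin k → (EuclideanSpace ℝ (Fin n)) × ℝ //
          (∀ i, 0 < (p i).2 ∧ Metric.ball (p i).1 (p i).2 ⊆
            Metric.ball (0 : EuclideanSpace ℝ (Fin n)) 1) ∧
          (∀ i j, i ≠ j →
            Disjoint (Metric.ball (p i).1 (p i).2) (Metric.ball (p j).1 (p j).2))},
        {g : Fin k → (Metric.ball (0 : EuclideanSpace ℝ (Fin n)) 1) //
          Function.Injective g}),
      (∀ p, ∀ i, (((F p).1 i : EuclideanSpace ℝ (Fin n)) = (p.1 i).1)) ∧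
      ∃ G, (F.comp G).Homotopic (ContinuousMap.id _) ∧
        (G.comp F).Homotopic (ContinuousMap.id _) :=
  centers_map_homotopyEquiv_general Metric.isOpen_ball
end
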